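/- Let p ≥ 3 be a prime number. For every integer n ≥ p, the number of Dyck paths of semilength n with L = p is |D_n^p| = 2·( T_{n-2, p-1} + Σ_{i=0}^{n-2-p} (i+1)·M_i·T_{n-4-i, p-1} ), where the sum is empty when n-2-p < 0. -/

import Mathlib

/-- A Dyck path of semilength `n`, encoded as a word on `Bool`
(`true` = up step `u`, `false` = down step `d`). -/
def IsDyckWord (n : ℕ) (w : List Bool) : Prop :=
  w.length = 2 * n ∧ w.count true = n ∧ w.count false = n ∧
    ∀ p : List Bool, p <+: w → p.count false ≤ p.count true

/-- The (0-based) indices of the up steps of `w`. -/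
def upIdxs (w : List Bool) : List ℕ := w.findIdxs (· == true)

/-- The (0-based) indices of the down steps of `w`. -/
def downIdxs (w : List Bool) : List ℕ := w.findIdxs (· == false)

/-- `rStat w i` is the number of `d`'s strictly between the `i`-th and the
`(i+1)`-st `u` of `w` (with `i` 1-indexed). -/
def rStat (w : List Bool) (i : ℕ) : ℕ :=
  ((w.take ((upIdxs w).getD i 0)).drop ((upIdxs w).getD (i - 1) 0 + 1)).count false

/-- `sStat w i` is the number of `u`'s strictly between the `i`-th and the
`(i+1)`-st `d` of `w` (with `i` 1-indexed). -/
def sStat (w : List Bool) (i : ℕ) : ℕ :=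
  ((w.take ((downIdxs w).getD i 0)).drop ((downIdxs w).getD (i - 1) 0 + 1)).count true

/-- The statistic `L(D) = ∏_{i=1}^{n-1} C(r_i + s_i, r_i)` of a Dyck path of semilength `n`. -/
def LStat (n : ℕ) (w : List Bool) : ℕ :=
  ∏ i ∈ Finset.Icc 1 (n - 1), Nat.choose (rStat w i + sStat w i) (rStat w i)

/-- `dyckL n k` = the set `𝒟ₙᵏ` of Dyck paths of semilength `n` with `L(D) = k`. -/
def dyckL (n k : ℕ) : Set (List Bool) := {w | IsDyckWord n w ∧ LStat n w = k}

/-- A Motzkin path, encoded as a word on `Option Bool`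
(`some true` = up, `some false` = down, `none` = horizontal). -/
def IsMotzkinWord (w : List (Option Bool)) : Prop :=
  w.count (some false) = w.count (some true) ∧
    ∀ p : List (Option Bool), p <+: w → p.count (some false) ≤ p.count (some true)

/-- `motzkin n` = the `n`-th Motzkin number `Mₙ`, the number of Motzkin paths of length `n`. -/
noncomputable def motzkin (n : ℕ) : ℕ :=
  {w : List (Option Bool) | w.length = n ∧ IsMotzkinWord w}.ncard

/-- The Motzkin ballot number `T_{n,k}`: the number of Motzkin paths of length `n`
whose first down step is in position `k` (1-indexed); by convention `T_{k-1,k} = 1`,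
counting the path of `k-1` horizontal steps. -/
noncomputable def motzkinBallot (n k : ℕ) : ℕ :=
  if n + 1 = k then 1
  else
    {w : List (Option Bool) | w.length = n ∧ IsMotzkinWord w ∧
      w.getD (k - 1) none = some false ∧ ∀ j < k - 1, w.getD j none ≠ some false}.ncard

/-- Motzkin numbers with integer index: `Mᵢ = 0` for `i < 0`. -/
noncomputable def motzkinZ (i : ℤ) : ℤ := if 0 ≤ i then (motzkin i.toNat : ℤ) else 0

/-- Motzkin ballot numbers with integer first index: `T_{n,k} = 0` for `n < 0`. -/
noncomputable def motzkinBallotZ (n : ℤ) (k : ℕ) : ℤ :=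
  if 0 ≤ n then (motzkinBallot n.toNat k : ℤ) else 0

/-- The set of returns of a Dyck path `w` of semilength `n`:
indices `1 ≤ k ≤ n` such that the path touches the `x`-axis after `2k` steps. -/
def returns (n : ℕ) (w : List Bool) : Finset ℕ :=
  (Finset.Icc 1 n).filter fun k => (w.take (2 * k)).count false = (w.take (2 * k)).count true

/-- `dyckRS n r s` = the set `𝒟ₙ^{r,s}` of Dyck paths of semilength `n` having exactly one
index `i` with `rᵢ > 0` and `sᵢ > 0`, and such that at that index `rᵢ = r` and `sᵢ = s`. -/
def dyckRS (n r s : ℕ) : Set (List Bool) :=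
  {w | IsDyckWord n w ∧ ∃ i ∈ Finset.Icc 1 (n - 1),
    (0 < rStat w i ∧ 0 < sStat w i) ∧ rStat w i = r ∧ sStat w i = s ∧
      ∀ j ∈ Finset.Icc 1 (n - 1), 0 < rStat w j ∧ 0 < sStat w j → j = i}

/-- `twoStars n w k₁ k₂` says that `k₁ < k₂` are exactly the two indices `i` of `w`
with `rᵢ > 0` and `sᵢ > 0`. -/
def twoStars (n : ℕ) (w : List Bool) (k₁ k₂ : ℕ) : Prop :=
  k₁ ∈ Finset.Icc 1 (n - 1) ∧ k₂ ∈ Finset.Icc 1 (n - 1) ∧ k₁ < k₂ ∧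
    (0 < rStat w k₁ ∧ 0 < sStat w k₁) ∧ (0 < rStat w k₂ ∧ 0 < sStat w k₂) ∧
    ∀ j ∈ Finset.Icc 1 (n - 1), 0 < rStat w j ∧ 0 < sStat w j → j = k₁ ∨ j = k₂

/-- `xStat w k` = the number of indices `i < k` with `rᵢ = 0` and `sᵢ > 0`. -/
def xStat (w : List Bool) (k : ℕ) : ℕ :=
  ((Finset.Ico 1 k).filter fun i => rStat w i = 0 ∧ 0 < sStat w i).card

/-- `yStat w k` = the number of indices `i < k` with `rᵢ > 0` and `sᵢ = 0`. -/
def yStat (w : List Bool) (k : ℕ) : ℕ :=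
  ((Finset.Ico 1 k).filter fun i => 0 < rStat w i ∧ sStat w i = 0).card

/-- The generating function `m(x) = Σ Mₙ xⁿ` of the Motzkin numbers, over `ℚ`. -/
noncomputable def motzkinGF : PowerSeries ℚ := PowerSeries.mk fun n => (motzkin n : ℚ)


/-!
Since `C(r + s, r) ≥ r + s` for positive `r` and `s`, with strict inequality unless one of them
is `1`, a path has `L = p` exactly when a single index `i` has both `rᵢ` and `sᵢ` positive, and
`{rᵢ, sᵢ} = {1, p - 1}` there. Reading a path backwards exchanges `rᵢ` with `sₙ₋ᵢ`, hence the
factor `2`.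

Recording for each `i` whether `rᵢ > 0` and whether `sᵢ > 0` identifies Dyck paths of semilength `n`
with bicoloured Motzkin paths of length `n - 1`, in which `i` is the only horizontal step of one
of the two colours. Deleting it leaves a Motzkin path `YZ` of length `n - 2`. If `Y` has `a` up
steps and `b` down steps, then `rᵢ` is the distance in `Y` from the `b`-th up step to the next one,
and `sᵢ` the distance in `Z` from the `(a - b)`-th down step to the next one; the end of the word
counts as a further step of the required kind.

For `rᵢ = 1` and `sᵢ = p - 1` there are two cases. If `Y` is empty, then `Z` is a Motzkin path whose
first down step is at position `p - 1` (or the path of `p - 2` horizontal steps). Otherwise the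
`(b + 1)`-st up step of `Y` directly follows the `b`-th. Remove it, together with the `(a - b)`-th
down step of `Z` and the longest Motzkin path `U` following that one. What remains is a Motzkin path
with a marked vertex, and `U` is as `Z` was in the first case. The removals can be undone, because
they do not affect the counts that locate them.
-/

section Lists

variable {α : Type*}

/-- A list is empty or its last entry is `a`. -/
def EndsIn (a : α) (l : List α) : Prop := l = [] ∨ ∃ l', l = l' ++ [a]

/-- A list is empty or its first entry is `a`. -/
def StartsIn (a : α) (l : List α) : Prop := l = [] ∨ ∃ l', l = a :: l'

theorem EndsIn.of_cons {a b : α} {l : List α} (h : EndsIn a (b :: l)) :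
    EndsIn a l := by
  obtain h | ⟨_ | ⟨c, l'⟩, h⟩ := h
  · simp at h
  · exact .inl (by simpa using congrArg List.tail h)
  · exact .inr ⟨l', by simpa using congrArg List.tail h⟩

variable [BEq α]

/-- The part of a list after the `n`-th occurrence of `a`: the whole list if `n = 0`, and `[]` if
`a` occurs fewer than `n` times. -/
def afterNth (a : α) : ℕ → List α → List α
  | 0, l => l
  | _ + 1, [] => []
  | n + 1, b :: l => if b == a then afterNth a n l else afterNth a (n + 1) l

theorem afterNth_map_beq (a : α) (n : ℕ) (l : List α) :
    afterNth true n (l.map (· == a)) = (afterNth a n l).map (· == a) := by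
  induction l generalizing n with
  | nil => cases n <;> rfl
  | cons b l ih =>
    obtain _ | n := n
    · rfl
    · by_cases hb : b == a <;> simp [afterNth, hb, ih]

theorem idxOf_map_beq (a : α) (l : List α) : (l.map (· == a)).idxOf true = l.idxOf a := by
  induction l with
  | nil => rfl
  | cons b l ih => by_cases hb : b == a <;> simp [List.idxOf_cons, hb, ih]

theorem count_map_beq (a : α) (l : List α) : (l.map (· == a)).count true = l.count a := by
  simp [List.count, List.countP_map, Function.comp_def]

variable [LawfulBEq α] {a : α}

theorem afterNth_append_cons (A B : List α) (n : ℕ) :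
    afterNth a (A.count a + n + 1) (A ++ a :: B) = afterNth a n B := by
  induction A with
  | nil => simp [afterNth]
  | cons b A ih =>
    by_cases h : b == a
    · rw [List.count_cons, if_pos h, List.cons_append, Nat.add_right_comm _ 1, afterNth, if_pos h,
        ih]
    · rw [List.count_cons, if_neg h, add_zero, List.cons_append, afterNth, if_neg h, ih]

theorem EndsIn.afterNth_append {A : List α} (hA : EndsIn a A) (B : List α) :
    afterNth a (A.count a) (A ++ B) = B := by
  obtain rfl | ⟨A, rfl⟩ := hA
  · simp [afterNth]
  · simpa [afterNth] using afterNth_append_cons A B 0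

theorem exists_eq_append_afterNth {n : ℕ} {l : List α} (hn : n ≤ l.count a) :
    ∃ A, EndsIn a A ∧ A.count a = n ∧ l = A ++ afterNth a n l := by
  induction l generalizing n with
  | nil => exact ⟨[], .inl rfl, by simpa [eq_comm] using hn, by cases n <;> rfl⟩
  | cons b l ih =>
    obtain _ | n := n
    · exact ⟨[], .inl rfl, rfl, rfl⟩
    by_cases hb : b = a
    · subst hb
      obtain ⟨A, hA, hc, hl⟩ := ih (n := n) (by simpa using hn)
      refine ⟨b :: A, .inr ?_, by simp [hc], by simpa [afterNth] using hl⟩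
      obtain rfl | ⟨A, rfl⟩ := hA
      exacts [⟨[], rfl⟩, ⟨b :: A, rfl⟩]
    · obtain ⟨A, hA, hc, hl⟩ := ih (n := n + 1) (by simpa [hb] using hn)
      refine ⟨b :: A, .inr ?_, by simp [hb, hc], by simpa [afterNth, hb] using hl⟩
      obtain rfl | ⟨A, rfl⟩ := hA
      exacts [by simp at hc, ⟨b :: A, rfl⟩]

theorem EndsIn.append_inj {A A' B B' : List α} (hA : EndsIn a A) (hA' : EndsIn a A')
    (hc : A.count a = A'.count a) (h : A ++ B = A' ++ B') : A = A' ∧ B = B' := by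
  have hB : B = B' := by rw [← hA.afterNth_append B, h, hc, hA'.afterNth_append]
  exact ⟨List.append_cancel_right (hB ▸ h), hB⟩

theorem append_cons_inj_of_count_eq {A A' B B' : List α} (hc : A.count a = A'.count a)
    (h : A ++ a :: B = A' ++ a :: B') : A = A' ∧ B = B' := by
  have := EndsIn.append_inj (A := A ++ [a]) (A' := A' ++ [a]) (B := B) (B' := B')
    (.inr ⟨A, rfl⟩) (.inr ⟨A', rfl⟩) (by simp [hc]) (by simpa using h)
  simpa using this

theorem StartsIn.append_inj {A A' B B' : List α} (hB : StartsIn a B) (hB' : StartsIn a B')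
    (hc : A.count a = A'.count a) (h : A ++ B = A' ++ B') : A = A' ∧ B = B' := by
  have hcons {C : List α} (hC : StartsIn a C) : ∃ D, C ++ [a] = a :: D := by
    obtain rfl | ⟨D, rfl⟩ := hC
    exacts [⟨[], rfl⟩, ⟨D ++ [a], rfl⟩]
  obtain ⟨D, hD⟩ := hcons hB
  obtain ⟨D', hD'⟩ := hcons hB'
  obtain rfl := (append_cons_inj_of_count_eq hc (B := D) (B' := D')
    (by rw [← hD, ← hD', ← List.append_assoc, h, List.append_assoc])).1
  exact ⟨rfl, List.append_cancel_left h⟩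

theorem exists_eq_append_of_le_count {n : ℕ} {l : List α} (hn : n ≤ l.count a) :
    ∃ A B, StartsIn a B ∧ A.count a = n ∧ l = A ++ B := by
  induction l generalizing n with
  | nil => exact ⟨[], [], .inl rfl, by simpa [eq_comm] using hn, rfl⟩
  | cons b l ih =>
    by_cases hb : b = a
    · subst hb
      obtain _ | n := n
      · exact ⟨[], b :: l, .inr ⟨l, rfl⟩, rfl, rfl⟩
      · obtain ⟨A, B, hB, hc, rfl⟩ := ih (n := n) (by simpa using hn)
        exact ⟨b :: A, B, hB, by simp [hc], rfl⟩
    · obtain ⟨A, B, hB, hc, rfl⟩ := ih (n := n) (by simpa [hb] using hn)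
      exact ⟨b :: A, B, hB, by simp [hb, hc], rfl⟩

theorem idxOf_append_of_startsIn (A : List α) {B : List α} (hB : StartsIn a B) :
    (A ++ B).idxOf a = A.idxOf a := by
  rw [List.idxOf_append]
  split_ifs with h
  · rfl
  · obtain rfl | ⟨B, rfl⟩ := hB <;> simp [List.idxOf_eq_length h]

theorem idxOf_afterNth_append_cons {n : ℕ} {A : List α} (hn : n ≤ A.count a) (B : List α) :
    (afterNth a n (A ++ a :: B)).idxOf a = (afterNth a n A).idxOf a := by
  obtain ⟨V, hV, rfl, hA⟩ := exists_eq_append_afterNth hn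
  nth_rw 1 [hA]
  rw [List.append_assoc, hV.afterNth_append, idxOf_append_of_startsIn _ (.inr ⟨B, rfl⟩)]

end Lists

section Walks

/-- `IsWalk h W k`: the lattice path `W` goes from height `h` to height `k` without going below
height `0`. -/
def IsWalk : ℕ → List (Option Bool) → ℕ → Prop
  | h, [], k => h = k
  | h, none :: W, k => IsWalk h W k
  | h, some true :: W, k => IsWalk (h + 1) W k
  | 0, some false :: _, _ => False
  | h + 1, some false :: W, k => IsWalk h W k

variable {A B W : List (Option Bool)} {h k : ℕ}

theorem isWalk_append : IsWalk h (A ++ B) k ↔ ∃ j, IsWalk h A j ∧ IsWalk j B k := by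
  induction A generalizing h with
  | nil => simp [IsWalk]
  | cons a A ih => rcases a with _ | _ | _ <;> rcases h with _ | h <;> simp [IsWalk, ih]

theorem IsWalk.count_eq (hW : IsWalk h W k) :
    h + W.count (some true) = k + W.count (some false) := by
  induction W generalizing h with
  | nil => simpa [IsWalk] using hW
  | cons a W ih =>
    rcases a with _ | _ | _ <;> rcases h with _ | h <;> simp only [IsWalk] at hW <;>
      first
      | exact hW.elim
      | (have := ih hW
         simp only [List.count_cons, beq_iff_eq, Option.some.injEq, Bool.true_eq_false,
           Bool.false_eq_true, reduceCtorEq, if_true, if_false, add_zero]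
         omega)

theorem IsWalk.eq (hW : IsWalk h W k) {j : ℕ} (hj : IsWalk h W j) : j = k := by
  have := hW.count_eq
  have := hj.count_eq
  omega

theorem IsWalk.add (hW : IsWalk h W k) (j : ℕ) : IsWalk (h + j) W (k + j) := by
  induction W generalizing h with
  | nil => simpa [IsWalk] using hW
  | cons a W ih =>
    rcases a with _ | _ | _ <;> rcases h with _ | h <;> simp only [IsWalk] at hW
    all_goals first
      | exact hW.elim
      | simpa [IsWalk, Nat.add_right_comm, Nat.add_comm 1] using ih hW

theorem isWalk_iff_prefix : IsWalk h W k ↔ h + W.count (some true) = k + W.count (some false) ∧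
    ∀ p : List (Option Bool), p <+: W → p.count (some false) ≤ h + p.count (some true) := by
  refine ⟨fun hW => ⟨hW.count_eq, ?_⟩, ?_⟩
  · rintro p ⟨q, rfl⟩
    obtain ⟨j, hj, -⟩ := isWalk_append.1 hW
    have := hj.count_eq
    omega
  · rintro ⟨heq, hle⟩
    induction W generalizing h with
    | nil => simpa [IsWalk] using heq
    | cons a W ih =>
      have hcons p (hp : p <+: W) : (a :: p).count (some false) ≤ h + (a :: p).count (some true) :=
        hle _ (by simpa using hp)
      have hnil := hcons [] W.nil_prefix
      rcases a with _ | _ | _ <;> rcases h with _ | h <;>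
        simp only [IsWalk, List.count_nil, List.count_cons, beq_iff_eq, Option.some.injEq,
          Bool.true_eq_false, Bool.false_eq_true, reduceCtorEq, if_true, if_false, add_zero]
          at * <;>
        first
        | omega
        | exact ih (by omega) fun p hp => by have := hcons p hp; omega

theorem isWalk_of_count_le (hle : W.count (some false) ≤ h)
    (heq : h + W.count (some true) = k + W.count (some false)) : IsWalk h W k :=
  isWalk_iff_prefix.2 ⟨heq, fun _ hp =>
    (hp.sublist.count_le _).trans (Nat.le_add_right_of_le hle)⟩

theorem isMotzkinWord_iff_isWalk : IsMotzkinWord W ↔ IsWalk 0 W 0 := by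
  simp [isWalk_iff_prefix, IsMotzkinWord, eq_comm]

theorem IsWalk.exists_firstPassage (hW : IsWalk (h + k) W 0) :
    ∃ U₁ U₂, W = U₁ ++ U₂ ∧ IsWalk k U₁ 0 ∧ StartsIn (some false) U₂ ∧ IsWalk h U₂ 0 := by
  induction W generalizing k with
  | nil =>
    obtain ⟨rfl, rfl⟩ : h = 0 ∧ k = 0 := by simpa [IsWalk] using hW
    exact ⟨[], [], rfl, rfl, .inl rfl, rfl⟩
  | cons a W ih =>
    rcases a with _ | _ | _
    · obtain ⟨U₁, U₂, rfl, h₁, h₂⟩ := ih hW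
      exact ⟨none :: U₁, U₂, rfl, h₁, h₂⟩
    · rcases k with _ | k
      · exact ⟨[], some false :: W, rfl, rfl, .inr ⟨W, rfl⟩, hW⟩
      · obtain ⟨U₁, U₂, rfl, h₁, h₂⟩ := ih (k := k) hW
        exact ⟨some false :: U₁, U₂, rfl, h₁, h₂⟩
    · obtain ⟨U₁, U₂, rfl, h₁, h₂⟩ := ih (k := k + 1) hW
      exact ⟨some true :: U₁, U₂, rfl, h₁, h₂⟩

theorem IsWalk.firstPassage_unique {U₁ U₂ U₁' U₂' : List (Option Bool)} (h₁ : IsWalk 0 U₁ 0)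
    (h₁' : IsWalk 0 U₁' 0) (h₂ : StartsIn (some false) U₂) (h₂' : StartsIn (some false) U₂')
    (h : U₁ ++ U₂ = U₁' ++ U₂') : U₁ = U₁' ∧ U₂ = U₂' := by
  have key {U U' E : List (Option Bool)} (hU : IsWalk 0 U 0) (hE : IsWalk 0 (U ++ E) 0)
      (hEU : StartsIn (some false) (E ++ U')) : E = [] := by
    obtain ⟨j, hj, hE⟩ := isWalk_append.1 hE
    obtain rfl := hU.eq hj
    rcases E with _ | ⟨a, E⟩
    · rfl
    · obtain h | ⟨l, h⟩ := hEU
      · simp at h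
      · obtain rfl : a = some false := by simpa using congrArg List.head? h
        exact hE.elim
  obtain ⟨E, rfl, rfl⟩ | ⟨E, rfl, rfl⟩ := List.append_eq_append_iff.1 h
  · simp [key h₁ h₁' h₂]
  · simp [key h₁' h₁ h₂']

end Walks

section Gaps

/-- The number of letters other than `b` strictly between the `i`-th and the `(i+1)`-st letter `b`
of `w` (with `i` 1-indexed), computed as in `rStat` and `sStat`. -/
def gap (b : Bool) (w : List Bool) (i : ℕ) : ℕ :=
  ((w.take ((w.findIdxs (· == b)).getD i 0)).drop
    ((w.findIdxs (· == b)).getD (i - 1) 0 + 1)).count (!b)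

theorem rStat_eq_gap : rStat = gap true := rfl

theorem sStat_eq_gap : sStat = gap false := rfl

theorem getD_findIdxs_append_cons (b : Bool) (x y : List Bool) :
    ((x ++ b :: y).findIdxs (· == b)).getD (x.count b) 0 = x.length := by
  have hlen : (x.findIdxs (· == b)).length = x.count b := List.length_findIdxs
  rw [List.findIdxs_append, List.getD_append_right _ _ _ _ hlen.le, hlen, Nat.sub_self]
  simp

theorem gap_append_cons_replicate (b : Bool) (x y : List Bool) (r : ℕ) :
    gap b (x ++ b :: (List.replicate r (!b) ++ b :: y)) (x.count b + 1) = r := by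
  have h₁ := getD_findIdxs_append_cons b x (List.replicate r (!b) ++ b :: y)
  have h₂ := getD_findIdxs_append_cons b (x ++ b :: List.replicate r (!b)) y
  have hcount : (x ++ b :: List.replicate r (!b)).count b = x.count b + 1 := by
    simp [List.count_replicate]
  rw [hcount, List.append_assoc, List.cons_append] at h₂
  have htake : x ++ b :: (List.replicate r (!b) ++ b :: y) =
      (x ++ b :: List.replicate r (!b)) ++ b :: y := by simp
  have hdrop : x ++ b :: List.replicate r (!b) = (x ++ [b]) ++ List.replicate r (!b) := by simp
  rw [gap, Nat.add_sub_cancel, h₁, h₂, htake, List.take_left, hdrop,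
    List.drop_left' (by simp), List.count_replicate_self]

theorem exists_eq_append_replicate {b : Bool} {w : List Bool} {i : ℕ} (h₁ : 1 ≤ i)
    (hi : i < w.count b) :
    ∃ x r y, w = x ++ b :: (List.replicate r (!b) ++ b :: y) ∧ x.count b + 1 = i := by
  obtain ⟨A, hA, rfl, hw⟩ := exists_eq_append_afterNth hi.le
  obtain rfl | ⟨x, rfl⟩ := hA
  · simp at h₁
  generalize afterNth b _ w = z at hw
  subst hw
  obtain ⟨C, hC, hcount, hz⟩ := exists_eq_append_afterNth (a := b) (n := 1) (l := z) (by
    simp only [List.count_append] at hi ⊢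
    omega)
  generalize afterNth b 1 z = y at hz
  subst hz
  obtain rfl | ⟨C, rfl⟩ := hC
  · simp at hcount
  have hC : C = List.replicate C.length (!b) := List.eq_replicate_iff.2 ⟨rfl, fun c hc =>
    Bool.eq_not_of_ne (ne_of_mem_of_not_mem hc (List.count_eq_zero.1 (by simpa using hcount)))⟩
  exact ⟨x, C.length, y, by simp [← hC], by simp⟩

theorem gap_eq_iff {b : Bool} {w : List Bool} {i r : ℕ} (h₁ : 1 ≤ i) (hi : i < w.count b) :
    gap b w i = r ↔
      ∃ x y, w = x ++ b :: (List.replicate r (!b) ++ b :: y) ∧ x.count b + 1 = i := by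
  constructor
  · rintro rfl
    obtain ⟨x, r, y, rfl, rfl⟩ := exists_eq_append_replicate h₁ hi
    rw [gap_append_cons_replicate]
    exact ⟨x, y, rfl, rfl⟩
  · rintro ⟨x, y, rfl, rfl⟩
    exact gap_append_cons_replicate b x y r

theorem gap_eq_idxOf_afterNth {b : Bool} {w : List Bool} {i : ℕ} (h₁ : 1 ≤ i)
    (hi : i < w.count b) : gap b w i = (afterNth b i w).idxOf b := by
  obtain ⟨x, r, y, rfl, rfl⟩ := exists_eq_append_replicate h₁ hi
  rw [gap_append_cons_replicate, ← add_zero (x.count b), afterNth_append_cons]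
  simp [afterNth, List.idxOf_append, List.mem_replicate]

end Gaps

section Mirror

/-- The mirror image of a lattice path, i.e. the path read backwards. -/
def mirror (w : List Bool) : List Bool := (w.map not).reverse

theorem mirror_mirror (w : List Bool) : mirror (mirror w) = w := by
  simp [mirror, Function.comp_def]

theorem mirror_append (x y : List Bool) : mirror (x ++ y) = mirror y ++ mirror x := by
  simp [mirror]

theorem count_mirror (b : Bool) (w : List Bool) : (mirror w).count b = w.count (!b) := by
  rw [mirror, List.count_reverse, ← List.count_map_of_injective w not Bool.not_injective,
    Bool.not_not]

theorem gap_mirror {b : Bool} {w : List Bool} {i : ℕ} (h₁ : 1 ≤ i) (hi : i < w.count b) :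
    gap (!b) (mirror w) (w.count b - i) = gap b w i := by
  obtain ⟨x, y, hw, rfl⟩ := (gap_eq_iff h₁ hi).1 rfl
  have hcount : w.count b = x.count b + 1 + (y.count b + 1) := by
    rw [hw]
    simp only [List.count_append, List.count_cons_self, List.count_replicate, beq_iff_eq,
      Bool.not_eq_self, if_false]
    omega
  rw [gap_eq_iff (by omega) (by rw [count_mirror, Bool.not_not]; omega)]
  refine ⟨mirror y, mirror x, ?_, ?_⟩
  · conv_lhs => rw [hw]
    simp [mirror]
  · rw [count_mirror, Bool.not_not]
    omega

variable {n : ℕ} {w : List Bool}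

theorem isDyckWord_mirror (hw : IsDyckWord n w) : IsDyckWord n (mirror w) := by
  obtain ⟨hlen, hup, hdown, hpre⟩ := hw
  refine ⟨by simpa [mirror] using hlen, by simpa [count_mirror], by simpa [count_mirror], ?_⟩
  rintro q ⟨t, ht⟩
  have hw : w = mirror t ++ mirror q := by rw [← mirror_append, ht, mirror_mirror]
  have hle := hpre (mirror t) ⟨_, hw.symm⟩
  rw [hw] at hup hdown
  simp only [List.count_append, count_mirror, Bool.not_true, Bool.not_false] at *
  omega

theorem mirror_mem_dyckRS {r s : ℕ} (hw : w ∈ dyckRS n r s) : mirror w ∈ dyckRS n s r := by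
  obtain ⟨hD, i, hi, hpos, rfl, rfl, huniq⟩ := hw
  have hr {j : ℕ} (hj : j ∈ Finset.Icc 1 (n - 1)) : rStat (mirror w) (n - j) = sStat w j := by
    rw [Finset.mem_Icc] at hj
    have := gap_mirror (b := false) (w := w) (i := j) hj.1 (by have := hD.2.2.1; omega)
    rwa [hD.2.2.1] at this
  have hs {j : ℕ} (hj : j ∈ Finset.Icc 1 (n - 1)) : sStat (mirror w) (n - j) = rStat w j := by
    rw [Finset.mem_Icc] at hj
    have := gap_mirror (b := true) (w := w) (i := j) hj.1 (by have := hD.2.1; omega)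
    rwa [hD.2.1] at this
  have hmem {j : ℕ} (hj : j ∈ Finset.Icc 1 (n - 1)) : n - j ∈ Finset.Icc 1 (n - 1) := by
    rw [Finset.mem_Icc] at *
    omega
  refine ⟨isDyckWord_mirror hD, n - i, hmem hi, ?_, hr hi, hs hi, fun j hj hjpos => ?_⟩
  · rw [hr hi, hs hi]
    exact hpos.symm
  · have hj' : n - (n - j) = j := by
      rw [Finset.mem_Icc] at hj
      omega
    rw [← hj', hr (hmem hj), hs (hmem hj)] at hjpos
    rw [← huniq _ (hmem hj) hjpos.symm, hj']

theorem ncard_dyckRS_comm (n r s : ℕ) : (dyckRS n r s).ncard = (dyckRS n s r).ncard := by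
  have himage : mirror '' dyckRS n r s = dyckRS n s r := by
    refine Set.Subset.antisymm ?_ fun w hw => ⟨_, mirror_mem_dyckRS hw, mirror_mirror w⟩
    rintro _ ⟨w, hw, rfl⟩
    exact mirror_mem_dyckRS hw
  rw [← himage, Set.ncard_image_of_injective _ (Function.LeftInverse.injective mirror_mirror)]

end Mirror

section PrimeStatistic

theorem add_le_choose {r s : ℕ} (hr : 0 < r) (hs : 0 < s) : r + s ≤ (r + s).choose r := by
  obtain ⟨r, rfl⟩ := Nat.exists_eq_add_one.2 hr
  induction s with
  | zero => exact hs.false.elim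
  | succ s ih =>
    obtain rfl | hs := s.eq_zero_or_pos
    · exact (Nat.choose_succ_self_right _).ge
    · rw [← add_assoc, Nat.choose_succ_succ', add_comm (Nat.choose _ _)]
      exact Nat.add_le_add (ih hs) (Nat.choose_pos (by omega))

theorem choose_eq_prime {r s p : ℕ} (hp : p.Prime) (hr : 0 < r) (hs : 0 < s)
    (h : (r + s).choose r = p) : r = 1 ∧ s = p - 1 ∨ r = p - 1 ∧ s = 1 := by
  have hle := add_le_choose hr hs
  have hge : p ≤ r + s := by
    rw [← hp.dvd_factorial, ← Nat.choose_mul_factorial_mul_factorial (Nat.le_add_right r s), h,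
      mul_assoc]
    exact dvd_mul_right _ _
  suffices r ≤ 1 ∨ s ≤ 1 by omega
  by_contra! hlt
  obtain ⟨⟨r, rfl⟩, ⟨s, rfl⟩⟩ := And.intro (Nat.exists_eq_add_one.2 hr) (Nat.exists_eq_add_one.2 hs)
  have h₁ := add_le_choose (r := r) (s := s + 1) (by omega) (by omega)
  have h₂ := add_le_choose (r := r + 1) (s := s) (by omega) (by omega)
  rw [← add_assoc, Nat.choose_succ_succ', Nat.add_right_comm r 1 s] at h
  rw [← add_assoc] at h₁
  rw [Nat.add_right_comm] at h₂
  omega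

theorem choose_add_eq_one_iff {r s : ℕ} : (r + s).choose r = 1 ↔ ¬(0 < r ∧ 0 < s) := by
  rw [Nat.choose_eq_one_iff]
  omega

variable {n p : ℕ}

theorem dyckL_subset (hp : p.Prime) : dyckL n p ⊆ dyckRS n 1 (p - 1) ∪ dyckRS n (p - 1) 1 := by
  rintro w ⟨hw, hL⟩
  obtain ⟨i, hi, hdvd⟩ := hp.prime.exists_mem_finset_dvd (dvd_of_eq hL.symm)
  rw [LStat, ← Finset.mul_prod_erase _ _ hi] at hL
  have hfactor := Nat.dvd_antisymm (Dvd.intro _ hL) hdvd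
  have hothers := Nat.eq_of_mul_eq_mul_left hp.pos ((hfactor ▸ hL).trans (mul_one p).symm)
  rw [Finset.prod_eq_one_iff] at hothers
  have hpos : 0 < rStat w i ∧ 0 < sStat w i := by
    by_contra hpos
    exact hp.one_lt.ne (hfactor ▸ (choose_add_eq_one_iff.2 hpos).symm)
  have huniq : ∀ j ∈ Finset.Icc 1 (n - 1), 0 < rStat w j ∧ 0 < sStat w j → j = i := by
    intro j hj hjpos
    by_contra hne
    exact choose_add_eq_one_iff.1 (hothers j (Finset.mem_erase.2 ⟨hne, hj⟩)) hjpos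
  exact (choose_eq_prime hp hpos.1 hpos.2 hfactor).imp
    (fun ⟨hr, hs⟩ => ⟨hw, i, hi, hpos, hr, hs, huniq⟩)
    (fun ⟨hr, hs⟩ => ⟨hw, i, hi, hpos, hr, hs, huniq⟩)

theorem dyckRS_subset_dyckL (n r s : ℕ) : dyckRS n r s ⊆ dyckL n ((r + s).choose r) := by
  rintro w ⟨hw, i, hi, -, rfl, rfl, huniq⟩
  refine ⟨hw, ?_⟩
  rw [LStat, ← Finset.mul_prod_erase _ _ hi, Finset.prod_eq_one, mul_one]
  intro j hj
  rw [Finset.mem_erase] at hj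
  exact choose_add_eq_one_iff.2 (mt (huniq j hj.2) hj.1)

theorem dyckL_eq_union (hp : p.Prime) :
    dyckL n p = dyckRS n 1 (p - 1) ∪ dyckRS n (p - 1) 1 := by
  have hadd : 1 + (p - 1) = p := Nat.add_sub_cancel' hp.one_le
  have hleft := dyckRS_subset_dyckL n 1 (p - 1)
  have hright := dyckRS_subset_dyckL n (p - 1) 1
  rw [Nat.choose_one_right, hadd] at hleft
  rw [Nat.choose_symm_add, Nat.choose_one_right, Nat.add_comm, hadd] at hright
  exact (dyckL_subset hp).antisymm (Set.union_subset hleft hright)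

theorem disjoint_dyckRS {r s r' s' : ℕ} (h : r ≠ r') :
    Disjoint (dyckRS n r s) (dyckRS n r' s') := by
  rw [Set.disjoint_left]
  rintro w ⟨-, i, hi, hpos, hr, -⟩ ⟨-, j, -, -, hr', -, huniq⟩
  exact h (hr.symm.trans (huniq i hi hpos ▸ hr'))

theorem finite_dyckRS (n r s : ℕ) : (dyckRS n r s).Finite :=
  (List.finite_length_eq Bool (2 * n)).subset fun _ hw => hw.1.1

theorem ncard_dyckL (hp : p.Prime) (hp3 : 3 ≤ p) :
    (dyckL n p).ncard = 2 * (dyckRS n 1 (p - 1)).ncard := by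
  rw [dyckL_eq_union hp, Set.ncard_union_eq (disjoint_dyckRS (by omega)) (finite_dyckRS ..)
    (finite_dyckRS ..), ncard_dyckRS_comm n (p - 1) 1, two_mul]

end PrimeStatistic

section Turns

/-- For each letter `b` of `w`, in order, whether the next letter differs from `b`. The last letter
of `w` is treated as if it were followed by an up step. -/
def turns (b : Bool) : List Bool → List Bool
  | [] => []
  | a :: w => if a = b then (w.headD true != b) :: turns b w else turns b w

/-- The word starting with `c` whose turns at up steps are `α` and whose turns at down steps are
`β`; it ends as soon as the required list is exhausted. -/
def weave : Bool → List Bool → List Bool → List Bool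
  | true, [], _ => []
  | true, x :: α, β => true :: weave (!x) α β
  | false, _, [] => []
  | false, α, y :: β => false :: weave y α β

theorem length_turns (b : Bool) (w : List Bool) : (turns b w).length = w.count b := by
  induction w with
  | nil => rfl
  | cons a w ih => by_cases h : a = b <;> simp [turns, h, ih]

theorem count_turns (w : List Bool) : (turns false w).count true =
    (turns true w).count true + (!w.headD true).toNat := by
  induction w with
  | nil => rfl
  | cons a w ih => cases a <;> cases h : w.headD true <;> simp_all [turns]

theorem endsIn_turns_false (w : List Bool) : EndsIn true (turns false w) := by
  induction w with
  | nil => exact .inl rfl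
  | cons a w ih =>
    cases a
    · obtain h | ⟨l, h⟩ := ih
      · have hcount := count_turns w
        refine .inr ⟨[], ?_⟩
        cases hw : w.headD true <;> simp_all [turns]
      · exact .inr ⟨(w.headD true != false) :: l, by simp [turns, h]⟩
    · exact ih

theorem weave_turns (w : List Bool) :
    weave (w.headD true) (turns true w) (turns false w) = w := by
  induction w with
  | nil => simp [turns, weave]
  | cons a w ih => cases a <;> simpa [turns, weave] using ih

theorem turns_weave {c : Bool} {α β : List Bool} (hβ : EndsIn true β)
    (hcount : β.count true = α.count true + (!c).toNat) :
    (weave c α β).headD true = c ∧ turns true (weave c α β) = α ∧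
      turns false (weave c α β) = β := by
  induction c, α, β using weave.induct with
  | case1 β =>
    obtain rfl | ⟨l, rfl⟩ := hβ
    · simp [turns, weave]
    · simp at hcount
  | case2 x α β ih =>
    obtain ⟨h, hα, hβ⟩ := ih hβ (by cases x <;> simpa using hcount)
    simp [weave, turns, hα, hβ, h, -List.headD_eq_head?_getD]
  | case3 α => simp at hcount
  | case4 α y β ih =>
    obtain ⟨h, hα, hβ⟩ := ih hβ.of_cons (by cases y <;> simpa using hcount)
    simp [weave, turns, hα, hβ, h, -List.headD_eq_head?_getD]

theorem idxOf_eq_of_turns {b : Bool} {w : List Bool} (hb : b ∈ w) :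
    w.idxOf b = if w.headD true = b then 0 else (turns (!b) w).idxOf true + 1 := by
  induction w with
  | nil => simp at hb
  | cons a w ih =>
    by_cases h : a = b
    · simp [h]
    · obtain rfl := Bool.eq_not_of_ne h
      have hw := ih (by simpa using hb)
      by_cases h' : w.headD true = b <;> simp_all [turns, -List.headD_eq_head?_getD]

/-- After a turn at a letter `b` comes a maximal run of letters `!b`, all of whose turns except the
last are `false`. -/
theorem idxOf_afterNth_succ {b : Bool} {w : List Bool} {i : ℕ} (hi : i + 1 < w.count b) :
    (afterNth b (i + 1) w).idxOf b = if (turns b w)[i]? = some true then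
      (afterNth true (((turns b w).take i).count true + (w.headD true != b).toNat)
        (turns (!b) w)).idxOf true + 1 else 0 := by
  induction w generalizing i with
  | nil => simp at hi
  | cons a w ih =>
    by_cases h : a = b
    · subst h
      obtain _ | i := i
      · have hw := idxOf_eq_of_turns (b := a) (w := w) (by simpa using hi)
        obtain h' | h' := Bool.eq_or_eq_not (w.headD true) a <;>
          simp_all [turns, afterNth, -List.headD_eq_head?_getD]
      · have := ih (i := i) (by simpa using hi)
        obtain h' | h' := Bool.eq_or_eq_not (w.headD true) a <;>
          simp_all [turns, afterNth, -List.headD_eq_head?_getD]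
    · obtain rfl := Bool.eq_not_of_ne h
      have := ih (i := i) (by simpa using hi)
      obtain h' | h' := Bool.eq_or_eq_not (w.headD true) b <;>
        simp_all [turns, afterNth, -List.headD_eq_head?_getD]

theorem forall_prefix_cons_iff {P : List Bool → Prop} {a : Bool} {w : List Bool} :
    (∀ p, p <+: a :: w → P p) ↔ P [] ∧ ∀ p, p <+: w → P (a :: p) := by
  refine ⟨fun h => ⟨h _ (List.nil_prefix), fun p hp => h _ (by simpa using hp)⟩, ?_⟩
  rintro ⟨hnil, hcons⟩ (_ | ⟨b, p⟩) hp
  · exact hnil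
  · obtain ⟨rfl, hpw⟩ := List.cons_prefix_cons.1 hp
    exact hcons p hpw

theorem forall_prefix_iff_turns {h : ℕ} {w : List Bool} :
    (∀ p : List Bool, p <+: w → p.count false ≤ h + p.count true) ↔
      ∀ j, ((turns true w).take j).count true + (!w.headD true).toNat ≤
        ((turns false w).take (h + j)).count true := by
  induction w generalizing h with
  | nil => simp [turns]
  | cons a w ih =>
    rw [forall_prefix_cons_iff]
    cases a
    · rcases h with _ | h
      · constructor
        · rintro ⟨-, hle⟩
          simpa using hle [] (List.nil_prefix)
        · intro hle
          simpa using hle 0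
      · have hw := @ih h
        have hcons p : (false :: p).count false ≤ h + 1 + (false :: p).count true ↔
            p.count false ≤ h + p.count true := by
          rw [List.count_cons_self, List.count_cons_of_ne (by decide), Nat.add_right_comm,
            Nat.add_le_add_iff_right]
        simp only [hcons, hw, turns]
        cases w.headD true <;> simp [Nat.add_right_comm _ 1]
    · have hw := @ih (h + 1)
      have hcons p : (true :: p).count false ≤ h + (true :: p).count true ↔
          p.count false ≤ h + 1 + p.count true := by
        rw [List.count_cons_of_ne (by decide), List.count_cons_self, Nat.add_right_comm h 1,
          add_assoc]
      have htake j : (((w.headD true != true) :: turns true w).take (j + 1)).count true =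
          ((turns true w).take j).count true + (!w.headD true).toNat := by
        cases w.headD true <;> simp
      simp only [hcons, hw, turns, if_true, Bool.true_eq_false, if_false]
      constructor
      · rintro ⟨-, hle⟩ (_ | j)
        · simp
        · rw [htake, ← Nat.add_assoc h, Nat.add_right_comm h]
          exact hle j
      · refine fun hle => ⟨by simp, fun j => ?_⟩
        have hj := hle (j + 1)
        rwa [htake, ← Nat.add_assoc h, Nat.add_right_comm h] at hj

end Turns

section Bicoloured

/-- The step of a bicoloured Motzkin path encoded by a pair of flags: `(false, true)` is an up step,
`(true, false)` a down step, and the other two pairs are the two colours of horizontal step. -/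
def step : Bool × Bool → Option Bool
  | (false, true) => some true
  | (true, false) => some false
  | _ => none

/-- The Dyck path of semilength `n + 1` corresponding to a bicoloured Motzkin path of length `n`:
the `i`-th step of `C` records whether `0 < rᵢ` and whether `0 < sᵢ`. -/
def pathOf (C : List (Bool × Bool)) : List Bool :=
  weave true (C.map Prod.fst ++ [true]) (C.map Prod.snd ++ [true])

variable {A B C : List (Bool × Bool)} {n : ℕ}

theorem count_map_step (C : List (Bool × Bool)) :
    (C.map step).count (some true) + (C.map Prod.fst).count true =
      (C.map step).count (some false) + (C.map Prod.snd).count true := by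
  induction C with
  | nil => rfl
  | cons c C ih => rcases c with ⟨_ | _, _ | _⟩ <;>
      simp only [step, List.map_cons, List.count_cons, beq_iff_eq, Option.some.injEq,
        Bool.true_eq_false, Bool.false_eq_true, reduceCtorEq, if_true, if_false] <;>
      omega

theorem isWalk_map_step_iff {h k : ℕ} : IsWalk h (C.map step) k ↔
    h + (C.map Prod.snd).count true = k + (C.map Prod.fst).count true ∧
      ∀ j, ((C.map Prod.fst).take j).count true ≤ h + ((C.map Prod.snd).take j).count true := by
  have hpre : (∀ p, p <+: C.map step → p.count (some false) ≤ h + p.count (some true)) ↔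
      ∀ j, ((C.take j).map step).count (some false) ≤ h + ((C.take j).map step).count (some true) :=
    ⟨fun H j => H _ ((List.take_prefix j C).map step), fun H p hp => by
      rw [List.prefix_iff_eq_take.1 hp, ← List.map_take]
      exact H _⟩
  rw [isWalk_iff_prefix, hpre]
  simp only [← List.map_take]
  have hC := count_map_step C
  refine and_congr (by omega) (forall_congr' fun j => ?_)
  have := count_map_step (C.take j)
  omega

theorem turns_pathOf (hC : IsWalk 0 (C.map step) 0) : (pathOf C).headD true = true ∧
    turns true (pathOf C) = C.map Prod.fst ++ [true] ∧
      turns false (pathOf C) = C.map Prod.snd ++ [true] :=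
  turns_weave (.inr ⟨_, rfl⟩) (by
    have := (isWalk_map_step_iff.1 hC).1
    simp only [List.count_append]
    simpa using this)

theorem pathOf_injOn : Set.InjOn pathOf {C | IsWalk 0 (C.map step) 0} := by
  intro C hC C' hC' h
  obtain ⟨-, hfst, hsnd⟩ := turns_pathOf hC
  obtain ⟨-, hfst', hsnd'⟩ := turns_pathOf hC'
  rw [h, hfst'] at hfst
  rw [h, hsnd'] at hsnd
  rw [← List.zip_unzip C, ← List.zip_unzip C', List.unzip_eq_map, List.unzip_eq_map]
  simp only [List.append_cancel_right hfst, List.append_cancel_right hsnd]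

theorem isDyckWord_iff_turns {w : List Bool} (hw : w.headD true = true) : IsDyckWord n w ↔
    w.count true = n ∧ w.count false = n ∧
      ∀ j, ((turns true w).take j).count true ≤ ((turns false w).take j).count true := by
  have hpre := forall_prefix_iff_turns (h := 0) (w := w)
  simp only [hw, zero_add, Bool.not_true, Bool.toNat_false, add_zero] at hpre
  rw [IsDyckWord, hpre, ← List.count_true_add_count_false]
  exact and_iff_right_of_imp fun ⟨_, _, _⟩ => by omega

theorem isDyckWord_pathOf (hC : IsWalk 0 (C.map step) 0) :
    IsDyckWord (C.length + 1) (pathOf C) := by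
  obtain ⟨hhead, hfst, hsnd⟩ := turns_pathOf hC
  rw [isDyckWord_iff_turns hhead, ← length_turns, ← length_turns, hfst, hsnd]
  simpa [List.take_append] using (isWalk_map_step_iff.1 hC).2

theorem exists_pathOf_eq {w : List Bool} (hw : IsDyckWord (n + 1) w) :
    ∃ C, C.length = n ∧ IsWalk 0 (C.map step) 0 ∧ pathOf C = w := by
  have hhead : w.headD true = true := by
    rcases w with _ | ⟨_ | _, w⟩
    · rfl
    · simpa using hw.2.2.2 [false] (by simp)
    · rfl
  have hcount := count_turns w
  have hweave := weave_turns w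
  obtain ⟨hup, hdown, hle⟩ := (isDyckWord_iff_turns hhead).1 hw
  rw [hhead] at hcount hweave
  rw [← length_turns] at hup hdown
  obtain hβ | ⟨β, hβ⟩ := endsIn_turns_false w
  · simp [hβ] at hdown
  obtain hα | ⟨α, x, hα⟩ := (turns true w).eq_nil_or_concat
  · simp [hα] at hup
  rw [List.concat_eq_append] at hα
  rw [hα, hβ] at hcount hweave hle
  have hlenα : α.length = n := by simpa [hα] using hup
  have hlenβ : β.length = n := by simpa [hβ] using hdown
  obtain rfl : x = true := by
    have := hle n
    rw [List.take_left' hlenα, List.take_left' hlenβ] at this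
    cases x
    · simp only [List.count_append, List.count_singleton_self, List.count_singleton,
        beq_iff_eq, Bool.not_true,
        Bool.toNat_false, Bool.false_eq_true, if_false] at hcount
      omega
    · rfl
  have hfst : (α.zip β).map Prod.fst = α := List.map_fst_zip (by omega)
  have hsnd : (α.zip β).map Prod.snd = β := List.map_snd_zip (by omega)
  refine ⟨α.zip β, by simp [hlenα, hlenβ], ?_, by rw [pathOf, hfst, hsnd, hweave]⟩
  rw [isWalk_map_step_iff, hfst, hsnd]
  exact ⟨by simpa using hcount, by simpa [List.take_append, hlenα, hlenβ] using hle⟩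

theorem rStat_pathOf (hC : IsWalk 0 (C.map step) 0) {j : ℕ} (hj : j < C.length) :
    rStat (pathOf C) (j + 1) = if (C.map Prod.fst)[j]? = some true then
      (afterNth true (((C.map Prod.fst).take j).count true)
        (C.map Prod.snd ++ [true])).idxOf true + 1 else 0 := by
  obtain ⟨hhead, hfst, hsnd⟩ := turns_pathOf hC
  have hi : j + 1 < (pathOf C).count true := by simpa [← length_turns, hfst] using hj
  rw [rStat_eq_gap, gap_eq_idxOf_afterNth j.succ_pos hi, idxOf_afterNth_succ hi, hhead, hfst,
    Bool.not_true, hsnd, List.getElem?_append_left (by simpa),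
    List.take_append_of_le_length (by simpa using hj.le)]
  rfl

theorem sStat_pathOf (hC : IsWalk 0 (C.map step) 0) {j : ℕ} (hj : j < C.length) :
    sStat (pathOf C) (j + 1) = if (C.map Prod.snd)[j]? = some true then
      (afterNth true (((C.map Prod.snd).take j).count true + 1)
        (C.map Prod.fst ++ [true])).idxOf true + 1 else 0 := by
  obtain ⟨hhead, hfst, hsnd⟩ := turns_pathOf hC
  have hi : j + 1 < (pathOf C).count false := by simpa [← length_turns, hsnd] using hj
  rw [sStat_eq_gap, gap_eq_idxOf_afterNth j.succ_pos hi, idxOf_afterNth_succ hi, hhead, hsnd,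
    Bool.not_false, hfst, List.getElem?_append_left (by simpa),
    List.take_append_of_le_length (by simpa using hj.le)]
  rfl

theorem rStat_pos_and_sStat_pos_iff (hC : IsWalk 0 (C.map step) 0) {j : ℕ} (hj : j < C.length) :
    0 < rStat (pathOf C) (j + 1) ∧ 0 < sStat (pathOf C) (j + 1) ↔ C[j] = (true, true) := by
  rw [rStat_pathOf hC hj, sStat_pathOf hC hj]
  simp only [List.getElem?_map, List.getElem?_eq_getElem hj, Option.map_some, Option.some.injEq,
    Prod.ext_iff]
  refine and_congr ?_ ?_ <;> split_ifs <;> simp_all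

theorem rStat_pathOf_star (hC : IsWalk 0 ((A ++ (true, true) :: B).map step) 0) :
    rStat (pathOf (A ++ (true, true) :: B)) (A.length + 1) =
      (afterNth true ((A.map Prod.fst).count true) (A.map Prod.snd)).idxOf true + 1 := by
  have hle := (isWalk_map_step_iff.1 hC).2 A.length
  rw [rStat_pathOf hC (by simp)]
  simp only [List.map_append, List.map_cons, zero_add, List.append_assoc, List.cons_append,
    List.take_left' (List.length_map (as := A) _)] at hle ⊢
  rw [if_pos (by simp), idxOf_afterNth_append_cons hle]

theorem sStat_pathOf_star (hC : IsWalk 0 ((A ++ (true, true) :: B).map step) 0) :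
    sStat (pathOf (A ++ (true, true) :: B)) (A.length + 1) =
      (afterNth true ((A.map Prod.snd).count true - (A.map Prod.fst).count true)
        (B.map Prod.fst)).idxOf true + 1 := by
  obtain ⟨hcount, hle⟩ := isWalk_map_step_iff.1 hC
  have hle := hle A.length
  rw [sStat_pathOf hC (by simp)]
  simp only [List.map_append, List.map_cons, zero_add, List.append_assoc, List.cons_append,
    List.take_left' (List.length_map (as := A) _), List.count_append, List.count_cons_self]
    at hcount hle ⊢
  obtain ⟨q, hq⟩ := Nat.exists_eq_add_of_le hle
  rw [if_pos (by simp), hq, Nat.add_sub_cancel_left, afterNth_append_cons,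
    idxOf_afterNth_append_cons (by omega)]

end Bicoloured

section Star

variable {N r s : ℕ} {Y Z : List (Option Bool)}

/-- The embedding of Motzkin paths into bicoloured ones, right inverse to `step`: horizontal steps
get the colour `(false, false)`. -/
def letter (a : Option Bool) : Bool × Bool := (a == some false, a == some true)

theorem step_letter (a : Option Bool) : step (letter a) = a := by
  rcases a with _ | _ | _ <;> rfl

theorem letter_injective : Function.Injective letter :=
  Function.LeftInverse.injective step_letter

theorem mem_range_letter_iff {c : Bool × Bool} : c ∈ Set.range letter ↔ c ≠ (true, true) := by
  constructor
  · rintro ⟨_ | _ | _, rfl⟩ <;> decide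
  · rcases c with ⟨_ | _, _ | _⟩ <;> intro h
    exacts [⟨none, rfl⟩, ⟨some true, rfl⟩, ⟨some false, rfl⟩, (h rfl).elim]

theorem exists_map_letter_eq_iff {A : List (Bool × Bool)} :
    (∃ Y : List (Option Bool), Y.map letter = A) ↔ (true, true) ∉ A := by
  rw [← Set.mem_range, Set.range_list_map]
  exact ⟨fun h hA => mem_range_letter_iff.1 (h _ hA) rfl,
    fun h c hc => mem_range_letter_iff.2 fun hc' => h (hc' ▸ hc)⟩

theorem notMem_map_letter (Y : List (Option Bool)) : (true, true) ∉ Y.map letter :=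
  exists_map_letter_eq_iff.1 ⟨Y, rfl⟩

/-- The bicoloured path made of `Y`, a horizontal step of colour `(true, true)` (a *star*),
and `Z`. -/
def starPath (Y Z : List (Option Bool)) : List (Bool × Bool) :=
  Y.map letter ++ (true, true) :: Z.map letter

theorem length_starPath (Y Z : List (Option Bool)) :
    (starPath Y Z).length = Y.length + Z.length + 1 := by
  simp [starPath, add_assoc]

theorem isWalk_map_step_starPath_iff :
    IsWalk 0 ((starPath Y Z).map step) 0 ↔ IsWalk 0 (Y ++ Z) 0 := by
  have hmap : (starPath Y Z).map step = Y ++ none :: Z := by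
    simp only [starPath, List.map_append, List.map_cons, List.map_map, Function.comp_def,
      step_letter, List.map_id']
    rfl
  simp only [hmap, isWalk_append, IsWalk]

theorem starPath_inj {Y' Z' : List (Option Bool)} (h : starPath Y Z = starPath Y' Z') :
    Y = Y' ∧ Z = Z' := by
  have hmap := List.map_injective_iff.2 letter_injective
  have := (List.append_cons_inj_of_notMem (notMem_map_letter Y) (notMem_map_letter Z)).1 h
  exact ⟨hmap this.1, hmap this.2.2⟩

/-- The pairs `(Y, Z)` of words of total length `N` whose concatenation is a Motzkin path and such
that the star between `Y` and `Z` encodes the pair of values `(r + 1, s + 1)`. -/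
def starSplits (r s N : ℕ) : Set (List (Option Bool) × List (Option Bool)) :=
  {P | P.1.length + P.2.length = N ∧ IsWalk 0 (P.1 ++ P.2) 0 ∧
    (afterNth (some true) (P.1.count (some false)) P.1).idxOf (some true) = r ∧
    (afterNth (some false) (P.1.count (some true) - P.1.count (some false)) P.2).idxOf
      (some false) = s}

theorem rStat_starPath (h : IsWalk 0 (Y ++ Z) 0) : rStat (pathOf (starPath Y Z)) (Y.length + 1) =
    (afterNth (some true) (Y.count (some false)) Y).idxOf (some true) + 1 := by
  have := rStat_pathOf_star (isWalk_map_step_starPath_iff.2 h)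
  simp only [List.map_map, List.length_map] at this
  rw [starPath, this]
  simp only [Function.comp_def, letter, count_map_beq, afterNth_map_beq, idxOf_map_beq]

theorem sStat_starPath (h : IsWalk 0 (Y ++ Z) 0) : sStat (pathOf (starPath Y Z)) (Y.length + 1) =
    (afterNth (some false) (Y.count (some true) - Y.count (some false)) Z).idxOf
      (some false) + 1 := by
  have := sStat_pathOf_star (isWalk_map_step_starPath_iff.2 h)
  simp only [List.map_map, List.length_map] at this
  rw [starPath, this]
  simp only [Function.comp_def, letter, count_map_beq, afterNth_map_beq, idxOf_map_beq]

theorem eq_length_of_getElem_starPath {j : ℕ} (hj : j < (starPath Y Z).length)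
    (h : (starPath Y Z)[j] = (true, true)) : j = Y.length := by
  simp only [starPath, List.getElem_append, List.length_map] at h
  split_ifs at h with hjY
  · exact (notMem_map_letter Y (h ▸ List.getElem_mem _)).elim
  · by_contra hne
    obtain ⟨m, hm⟩ : ∃ m, j - Y.length = m + 1 := ⟨j - Y.length - 1, by omega⟩
    simp only [hm, List.getElem_cons_succ] at h
    exact notMem_map_letter Z (h ▸ List.getElem_mem _)

theorem exists_starPath_eq {C : List (Bool × Bool)} {i : ℕ} (hi : i < C.length)
    (hstar : C[i] = (true, true))
    (huniq : ∀ (j : ℕ) (hj : j < C.length), C[j] = (true, true) → j = i) :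
    ∃ Y Z, Y.length = i ∧ starPath Y Z = C := by
  obtain ⟨Y, hY⟩ := (exists_map_letter_eq_iff (A := C.take i)).2 fun h => by
    obtain ⟨j, hj, hjC⟩ := List.mem_take_iff_getElem.1 h
    have := huniq j (by omega) hjC
    omega
  obtain ⟨Z, hZ⟩ := (exists_map_letter_eq_iff (A := C.drop (i + 1))).2 fun h => by
    obtain ⟨j, hj, hjC⟩ := List.mem_drop_iff_getElem.1 h
    have := huniq (i + 1 + j) (by omega) hjC
    omega
  refine ⟨Y, Z, ?_, ?_⟩
  · rw [← List.length_map letter, hY, List.length_take_of_le hi.le]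
  · rw [starPath, hY, hZ, ← hstar, List.cons_getElem_drop_succ, List.take_append_drop]

theorem pathOf_starPath_mem_dyckRS (h : (Y, Z) ∈ starSplits r s N) :
    pathOf (starPath Y Z) ∈ dyckRS (N + 2) (r + 1) (s + 1) := by
  obtain ⟨rfl, hW, hr, hs⟩ := h
  have hC := isWalk_map_step_starPath_iff.2 hW
  have hr := hr ▸ rStat_starPath hW
  have hs := hs ▸ sStat_starPath hW
  refine ⟨by simpa [length_starPath] using isDyckWord_pathOf hC, Y.length + 1, ?_, ⟨?_, ?_⟩,
    hr, hs, ?_⟩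
  · simp
  · simp [hr]
  · simp [hs]
  · intro j hj hpos
    obtain ⟨j, rfl⟩ := Nat.exists_eq_add_of_le' (Finset.mem_Icc.1 hj).1
    have hj : j < (starPath Y Z).length := by
      rw [length_starPath]
      have hle : j + 1 ≤ Y.length + Z.length + 1 := (Finset.mem_Icc.1 hj).2
      omega
    rw [eq_length_of_getElem_starPath hj ((rStat_pos_and_sStat_pos_iff hC hj).1 hpos)]

theorem exists_pathOf_starPath_eq {w : List Bool} (hw : w ∈ dyckRS (N + 2) (r + 1) (s + 1)) :
    ∃ P ∈ starSplits r s N, pathOf (starPath P.1 P.2) = w := by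
  obtain ⟨hD, i, hi, hpos, hr, hs, huniq⟩ := hw
  obtain ⟨C, hlen, hC, rfl⟩ := exists_pathOf_eq hD
  obtain ⟨i, rfl⟩ := Nat.exists_eq_add_of_le' (Finset.mem_Icc.1 hi).1
  have hi : i < C.length := by
    have := (Finset.mem_Icc.1 hi).2
    omega
  obtain ⟨Y, Z, rfl, rfl⟩ := exists_starPath_eq hi ((rStat_pos_and_sStat_pos_iff hC hi).1 hpos)
    fun j hj hjC => by
      have := huniq (j + 1) (Finset.mem_Icc.2 ⟨by omega, by omega⟩)
        ((rStat_pos_and_sStat_pos_iff hC hj).2 hjC)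
      omega
  have hW := isWalk_map_step_starPath_iff.1 hC
  rw [rStat_starPath hW] at hr
  rw [sStat_starPath hW] at hs
  rw [length_starPath] at hlen
  exact ⟨(Y, Z), ⟨Nat.succ.inj hlen, hW, Nat.succ.inj hr, Nat.succ.inj hs⟩, rfl⟩

theorem ncard_dyckRS (N r s : ℕ) :
    (dyckRS (N + 2) (r + 1) (s + 1)).ncard = (starSplits r s N).ncard := by
  have himage : (fun P => pathOf (starPath P.1 P.2)) '' starSplits r s N =
      dyckRS (N + 2) (r + 1) (s + 1) := by
    refine Set.Subset.antisymm ?_ fun w => exists_pathOf_starPath_eq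
    rintro _ ⟨P, hP, rfl⟩
    exact pathOf_starPath_mem_dyckRS hP
  rw [← himage, Set.InjOn.ncard_image]
  intro P hP Q hQ h
  exact Prod.ext_iff.2 (starPath_inj (pathOf_injOn (isWalk_map_step_starPath_iff.2 hP.2.1)
    (isWalk_map_step_starPath_iff.2 hQ.2.1) h))

end Star

section Transport

variable {N k i : ℕ} {A B C U E Y Z : List (Option Bool)}

/-- The pieces of a Motzkin path `preUp ++ postUp ++ (preDown ++ postDown)`, marked at the vertex
after `postUp`, and of a second Motzkin path `bump`; `Cut.lift` inserts an up step before the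
marked vertex, and a down step and the second path behind it. -/
structure Cut where
  preUp : List (Option Bool)
  postUp : List (Option Bool)
  preDown : List (Option Bool)
  bump : List (Option Bool)
  postDown : List (Option Bool)

namespace Cut

/-- The marked path, split at its marked vertex, together with `bump`. -/
def base (c : Cut) : (List (Option Bool) × List (Option Bool)) × List (Option Bool) :=
  ((c.preUp ++ c.postUp, c.preDown ++ c.postDown), c.bump)

/-- The path obtained by inserting the two steps and `bump`, split at the marked vertex. -/
def lift (c : Cut) : List (Option Bool) × List (Option Bool) :=
  (c.preUp ++ some true :: c.postUp, c.preDown ++ some false :: (c.bump ++ c.postDown))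

/-- The conditions that make both `base` and `lift` injective: the places of insertion are
determined by counting the steps on either side of the marked vertex. The parameters are the index
`k` of the first down step of `bump`, and the length `N` of the lifted path. -/
structure IsValid (c : Cut) (k N : ℕ) : Prop where
  endsIn : EndsIn (some true) c.preUp
  count_left : c.preUp.count (some true) = (c.preUp ++ c.postUp).count (some false)
  count_right : c.preDown.count (some false) = c.postUp.count (some true)
  startsIn : StartsIn (some false) c.postDown
  isWalk : IsWalk 0 (c.preUp ++ c.postUp ++ (c.preDown ++ c.postDown)) 0
  isWalk_bump : IsWalk 0 c.bump 0
  idxOf_bump : c.bump.idxOf (some false) = k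
  length_eq : (c.preUp ++ c.postUp).length + (c.preDown ++ c.postDown).length +
    c.bump.length + 2 = N

end Cut

/-- The pairs of a Motzkin path split at a vertex and a Motzkin path whose first down step has
index `k`, of total length `N - 2`. -/
def markedPairs (k N : ℕ) :
    Set ((List (Option Bool) × List (Option Bool)) × List (Option Bool)) :=
  {T | T.1.1.length + T.1.2.length + T.2.length + 2 = N ∧ IsWalk 0 (T.1.1 ++ T.1.2) 0 ∧
    IsWalk 0 T.2 0 ∧ T.2.idxOf (some false) = k}

theorem Cut.injOn_base (k N : ℕ) : Set.InjOn Cut.base {c | c.IsValid k N} := by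
  rintro ⟨A, B, C, U, E⟩ ⟨hA, hl, hr, hE, -⟩ ⟨A', B', C', U', E'⟩ ⟨hA', hl', hr', hE', -⟩ h
  simp only [Cut.base, Prod.mk.injEq] at h hl hl' hr hr'
  obtain ⟨⟨hAB, hCE⟩, rfl⟩ := h
  obtain ⟨rfl, rfl⟩ := hA.append_inj hA' (by rw [hl, hl', hAB]) hAB
  obtain ⟨rfl, rfl⟩ := hE.append_inj hE' (hr.trans hr'.symm) hCE
  rfl

theorem Cut.injOn_lift (k N : ℕ) : Set.InjOn Cut.lift {c | c.IsValid k N} := by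
  rintro ⟨A, B, C, U, E⟩ ⟨hA, hl, hr, hE, -, hU, -⟩ ⟨A', B', C', U', E'⟩
    ⟨hA', hl', hr', hE', -, hU', -⟩ h
  simp only [Cut.lift, Prod.mk.injEq] at h hl hl' hr hr'
  obtain ⟨hY, hZ⟩ := h
  have hcount := congrArg (List.count (some false)) hY
  obtain ⟨rfl, hB⟩ := hA.append_inj hA' (by simpa [hl, hl'] using hcount) hY
  obtain rfl := (List.cons.inj hB).2
  obtain ⟨rfl, hUE⟩ := append_cons_inj_of_count_eq (hr.trans hr'.symm) hZ
  obtain ⟨rfl, rfl⟩ := hU.firstPassage_unique hU' hE hE' hUE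
  rfl

theorem Cut.image_base (k N : ℕ) : Cut.base '' {c | c.IsValid k N} = markedPairs k N := by
  refine Set.Subset.antisymm ?_ ?_
  · rintro _ ⟨c, hc, rfl⟩
    exact ⟨hc.length_eq, hc.isWalk, hc.isWalk_bump, hc.idxOf_bump⟩
  · rintro ⟨⟨P, Q⟩, U⟩ ⟨hlen, hW, hU, hidx⟩
    obtain ⟨j, hP : IsWalk 0 P j, hQ : IsWalk j Q 0⟩ := isWalk_append.1 hW
    have hPc := hP.count_eq
    have hQc := hQ.count_eq
    obtain ⟨A, hA, hAc, hAB⟩ := exists_eq_append_afterNth (a := some true)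
      (n := P.count (some false)) (l := P) (by omega)
    generalize afterNth (some true) (P.count (some false)) P = B at hAB
    subst hAB
    simp only [List.count_append] at hPc hAc
    obtain ⟨C, E, hE, hC, rfl⟩ := exists_eq_append_of_le_count (a := some false)
      (n := B.count (some true)) (l := Q) (by omega)
    exact ⟨⟨A, B, C, U, E⟩, ⟨hA, by simpa using hAc, hC, hE, hW, hU, hidx, hlen⟩, rfl⟩

theorem isWalk_lift (h : IsWalk 0 (A ++ B ++ (C ++ E)) 0) (hU : IsWalk 0 U 0) :
    IsWalk 0 (A ++ some true :: B ++ (C ++ some false :: (U ++ E))) 0 := by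
  simp only [isWalk_append] at h ⊢
  obtain ⟨j, ⟨a, hA, hB⟩, e, hC, hE⟩ := h
  exact ⟨j + 1, ⟨a, hA, hB.add 1⟩, e + 1, hC.add 1,
    isWalk_append.2 ⟨e, by simpa using hU.add e, hE⟩⟩

theorem Cut.IsValid.lift_mem {c : Cut} (hc : c.IsValid k N) :
    c.lift ∈ starSplits 0 k N ∧ c.lift.1 ≠ [] := by
  obtain ⟨hA, hl, hr, hE, hW, hU, rfl, rfl⟩ := hc
  have hdown : c.lift.1.count (some false) = c.preUp.count (some true) := by simp [lift, hl]
  have hup : c.lift.1.count (some true) - c.lift.1.count (some false) =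
      c.preDown.count (some false) + 0 + 1 := by
    rw [hdown]
    simp [lift, hr]
  refine ⟨⟨?_, isWalk_lift hW hU, ?_, ?_⟩, by simp [lift]⟩
  · simp only [lift, List.length_append, List.length_cons]
    omega
  · rw [hdown, lift, hA.afterNth_append, List.idxOf_cons_self]
  · rw [hup]
    simp only [lift]
    rw [afterNth_append_cons _ _ 0, afterNth, idxOf_append_of_startsIn _ hE]

theorem not_endsIn_of_isWalk (hY : IsWalk 0 Y 0) (hne : Y ≠ []) : ¬ EndsIn (some true) Y := by
  rintro (rfl | ⟨Y, rfl⟩)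
  · exact hne rfl
  · obtain ⟨j, -, hj⟩ := isWalk_append.1 hY
    exact Nat.succ_ne_zero j hj

theorem exists_eq_append_up (hY : IsWalk 0 Y i) (hne : Y ≠ [])
    (hidx : (afterNth (some true) (Y.count (some false)) Y).idxOf (some true) = 0) :
    ∃ A B, EndsIn (some true) A ∧ A.count (some true) = (A ++ B).count (some false) ∧
      Y = A ++ some true :: B := by
  have hYc := hY.count_eq
  obtain ⟨A, hA, hAc, hAB⟩ :=
    exists_eq_append_afterNth (a := some true) (n := Y.count (some false)) (l := Y) (by omega)
  rcases hR : afterNth (some true) (Y.count (some false)) Y with _ | ⟨b, B⟩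
  · obtain rfl : Y = A := by rw [hAB, hR, List.append_nil]
    obtain rfl : i = 0 := by omega
    exact (not_endsIn_of_isWalk hY hne hA).elim
  · obtain rfl : b = some true := by
      by_contra hb
      simp [hR, hb] at hidx
    rw [hR] at hAB
    exact ⟨A, B, hA, by simpa [hAB] using hAc, hAB⟩

theorem exists_eq_append_down {n : ℕ} (hZ : IsWalk (n + 1) Z 0) :
    ∃ C U E e, C.count (some false) = n ∧ IsWalk (n + 1) C (e + 1) ∧ IsWalk 0 U 0 ∧
      StartsIn (some false) E ∧ IsWalk e E 0 ∧ Z = C ++ some false :: (U ++ E) := by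
  have hZc := hZ.count_eq
  obtain ⟨C, D, hD, rfl, rfl⟩ :=
    exists_eq_append_of_le_count (a := some false) (n := n) (l := Z) (by omega)
  obtain rfl | ⟨D, rfl⟩ := hD
  · rw [List.append_nil] at hZc
    omega
  obtain ⟨_ | e, hC, hD⟩ := isWalk_append.1 hZ
  · exact hD.elim
  · obtain ⟨U, E, rfl, hU, hE, hEe⟩ := IsWalk.exists_firstPassage (h := e) (k := 0) hD
    exact ⟨C, U, E, e, rfl, hC, hU, hE, hEe, rfl⟩

theorem isWalk_of_lift {e : ℕ} (hl : A.count (some true) = (A ++ B).count (some false))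
    (hr : C.count (some false) = B.count (some true)) (hAB : IsWalk 0 (A ++ some true :: B) i)
    (hC : IsWalk i C (e + 1)) (hE : IsWalk e E 0) : IsWalk 0 (A ++ B ++ (C ++ E)) 0 := by
  have hne : some true ≠ some false := by decide
  have hABc := hAB.count_eq
  have hCc := hC.count_eq
  obtain ⟨a, hA, -⟩ := isWalk_append.1 hAB
  have hAc := hA.count_eq
  simp only [List.count_append, List.count_cons_self, List.count_cons_of_ne hne] at hl hABc
  have hB' : IsWalk a B (B.count (some true)) := isWalk_of_count_le (by omega) (by omega)
  have hC' : IsWalk (B.count (some true)) C e := isWalk_of_count_le hr.le (by omega)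
  exact isWalk_append.2 ⟨_, isWalk_append.2 ⟨a, hA, hB'⟩, isWalk_append.2 ⟨e, hC', hE⟩⟩

theorem exists_lift_eq (h : (Y, Z) ∈ starSplits 0 k N) (hne : Y ≠ []) :
    ∃ c : Cut, c.IsValid k N ∧ c.lift = (Y, Z) := by
  obtain ⟨hlen, hW, hr, hs⟩ := h
  obtain ⟨i, hY : IsWalk 0 Y i, hZ : IsWalk i Z 0⟩ := isWalk_append.1 hW
  obtain ⟨A, B, hA, hl, rfl⟩ := exists_eq_append_up hY hne hr
  have hdown : (A ++ some true :: B).count (some false) = A.count (some true) := by simp [hl]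
  have hup : (A ++ some true :: B).count (some true) =
      A.count (some true) + (B.count (some true) + 1) := by simp
  have hYc := hY.count_eq
  obtain rfl : i = B.count (some true) + 1 := by omega
  obtain ⟨C, U, E, e, hC, hCe, hU, hE, hEe, rfl⟩ := exists_eq_append_down hZ
  refine ⟨⟨A, B, C, U, E⟩, ⟨hA, hl, hC, hE, isWalk_of_lift hl hC hY hCe hEe, hU, ?_, ?_⟩, rfl⟩
  · simp only [hdown, hup, Nat.add_sub_cancel_left, ← hC] at hs
    rwa [afterNth_append_cons _ _ 0, afterNth, idxOf_append_of_startsIn _ hE] at hs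
  · simp only [List.length_append, List.length_cons] at hlen ⊢
    omega

theorem Cut.image_lift (k N : ℕ) :
    Cut.lift '' {c | c.IsValid k N} = {P | P ∈ starSplits 0 k N ∧ P.1 ≠ []} := by
  refine Set.Subset.antisymm ?_ fun P hP => exists_lift_eq hP.1 hP.2
  rintro _ ⟨c, hc, rfl⟩
  exact hc.lift_mem

theorem ncard_starSplits_ne_nil (k N : ℕ) :
    {P | P ∈ starSplits 0 k N ∧ P.1 ≠ []}.ncard = (markedPairs k N).ncard := by
  rw [← Cut.image_lift, ← Cut.image_base, (Cut.injOn_lift k N).ncard_image,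
    (Cut.injOn_base k N).ncard_image]

end Transport

section Counting

variable {k N : ℕ}

/-- The Motzkin paths of length `m` whose first down step has index `k`; the path without down
steps belongs to it for `k = m`. -/
def firstDownAt (k m : ℕ) : Set (List (Option Bool)) :=
  {U | U.length = m ∧ IsWalk 0 U 0 ∧ U.idxOf (some false) = k}

/-- The Motzkin paths of length `i`, split at one of their `i + 1` vertices. -/
def motzkinSplits (i : ℕ) : Set (List (Option Bool) × List (Option Bool)) :=
  {P | P.1.length + P.2.length = i ∧ IsWalk 0 (P.1 ++ P.2) 0}

theorem firstDownAt_self (m : ℕ) : firstDownAt m m = {List.replicate m none} := by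
  ext U
  simp only [firstDownAt, Set.mem_ofPred_eq, Set.mem_singleton_iff]
  constructor
  · rintro ⟨hlen, hU, hidx⟩
    have hd : some false ∉ U := fun h => by
      have := List.idxOf_lt_length_of_mem h
      omega
    have hu : some true ∉ U := by
      have := hU.count_eq
      rwa [← List.count_eq_zero, ← zero_add (U.count (some true)), this, zero_add,
        List.count_eq_zero]
    refine List.eq_replicate_iff.2 ⟨hlen, fun b hb => ?_⟩
    rcases b with _ | _ | _
    exacts [rfl, (hd hb).elim, (hu hb).elim]
  · rintro rfl
    refine ⟨by simp, isWalk_of_count_le (by simp [List.count_replicate])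
      (by simp [List.count_replicate]), ?_⟩
    rw [List.idxOf_eq_length (by simp), List.length_replicate]

theorem idxOf_eq_iff_getD {U : List (Option Bool)} (hk : k ≠ U.length) :
    U.idxOf (some false) = k ↔
      U.getD k none = some false ∧ ∀ j < k, U.getD j none ≠ some false := by
  induction U generalizing k with
  | nil => simpa [eq_comm] using hk
  | cons a U ih =>
    rw [List.idxOf_cons]
    obtain rfl | ha := eq_or_ne a (some false)
    · obtain _ | k := k
      · simp
      · simp only [beq_self_eq_true, cond_true, (Nat.succ_ne_zero k).symm, false_iff]
        exact fun h => h.2 0 k.succ_pos rfl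
    · rw [beq_false_of_ne ha, cond_false]
      obtain _ | k := k
      · simp [ha]
      · rw [Nat.add_right_cancel_iff, ih (by simpa using hk), Nat.forall_lt_succ_left]
        simp only [List.getD_cons_succ, List.getD_cons_zero, ne_eq, ha, not_false_eq_true, true_and]

theorem ncard_firstDownAt (k m : ℕ) : (firstDownAt k m).ncard = motzkinBallot m (k + 1) := by
  rw [motzkinBallot]
  split_ifs with h
  · obtain rfl : m = k := Nat.succ.inj h
    rw [firstDownAt_self, Set.ncard_singleton]
  · congr 1
    ext U
    simp only [firstDownAt, Set.mem_ofPred_eq, isMotzkinWord_iff_isWalk, Nat.add_sub_cancel]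
    refine and_congr_right fun hlen => and_congr_right fun _ => idxOf_eq_iff_getD ?_
    omega

theorem ncard_motzkinSplits (i : ℕ) : (motzkinSplits i).ncard = (i + 1) * motzkin i := by
  have himage : (fun q : ℕ × List (Option Bool) => (q.2.take q.1, q.2.drop q.1)) ''
      Set.Iic i ×ˢ {w | w.length = i ∧ IsMotzkinWord w} = motzkinSplits i := by
    refine Set.Subset.antisymm ?_ ?_
    · rintro _ ⟨⟨j, w⟩, ⟨-, rfl, hw⟩, rfl⟩
      exact ⟨by simp only [← List.length_append, List.take_append_drop],
        by simpa using isMotzkinWord_iff_isWalk.1 hw⟩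
    · rintro ⟨P, Q⟩ ⟨rfl, hW⟩
      exact ⟨(P.length, P ++ Q), ⟨by simp, by simp, isMotzkinWord_iff_isWalk.2 hW⟩, by simp⟩
  rw [← himage, Set.InjOn.ncard_image, Set.ncard_prod, Set.ncard_Iic_nat, motzkin]
  rintro ⟨j, w⟩ ⟨hj, hw, -⟩ ⟨j', w'⟩ ⟨hj', hw', -⟩ h
  simp only [Set.mem_Iic, Prod.mk.injEq] at hj hj' hw hw' h
  have hw : w = w' := by rw [← w.take_append_drop j, h.1, h.2, List.take_append_drop]
  have hlen := congrArg List.length h.1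
  simp only [List.length_take] at hlen
  exact Prod.ext (by dsimp only; omega) hw

theorem mem_markedPairs_iff {T : (List (Option Bool) × List (Option Bool)) × List (Option Bool)} :
    T ∈ markedPairs k N ↔
      ∃ i < N - 1 - k, T ∈ motzkinSplits i ×ˢ firstDownAt k (N - 2 - i) := by
  have hle := List.idxOf_le_length (a := some false) (l := T.2)
  constructor
  · rintro ⟨hlen, hW, hU, rfl⟩
    exact ⟨_, by omega, ⟨rfl, hW⟩, by omega, hU, rfl⟩
  · rintro ⟨i, hi, ⟨hlen, hW⟩, hlenU, hU, rfl⟩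
    exact ⟨by omega, hW, hU, rfl⟩

theorem finite_length_add_length_eq (α : Type*) [Finite α] (n : ℕ) :
    {P : List α × List α | P.1.length + P.2.length = n}.Finite :=
  ((List.finite_length_le α n).prod (List.finite_length_le α n)).subset fun _ hP =>
    ⟨Nat.le.intro hP, Nat.le_of_add_left_le hP.le⟩

theorem finite_motzkinSplits (i : ℕ) : (motzkinSplits i).Finite :=
  (finite_length_add_length_eq _ i).subset fun _ hP => hP.1

theorem finite_firstDownAt (k m : ℕ) : (firstDownAt k m).Finite :=
  (List.finite_length_eq _ m).subset fun _ h => h.1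

theorem ncard_markedPairs (k N : ℕ) : (markedPairs k N).ncard =
    ∑ i ∈ Finset.range (N - 1 - k), (i + 1) * motzkin i * motzkinBallot (N - 2 - i) (k + 1) := by
  have hunion : markedPairs k N = ⋃ i ∈ (Finset.range (N - 1 - k) : Set ℕ),
      motzkinSplits i ×ˢ firstDownAt k (N - 2 - i) := by
    ext T
    simp only [mem_markedPairs_iff, Set.mem_iUnion, Finset.coe_range, Set.mem_Iio, exists_prop]
  rw [hunion, (Finset.finite_toSet _).ncard_biUnion, finsum_mem_coe_finset]
  · simp only [Set.ncard_prod, ncard_motzkinSplits, ncard_firstDownAt]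
  · exact fun i _ => (finite_motzkinSplits i).prod (finite_firstDownAt _ _)
  · intro i _ j _ hij
    refine Set.disjoint_left.2 fun T hT hT' => hij ?_
    exact hT.1.1.symm.trans hT'.1.1

theorem ncard_starSplits_nil (k N : ℕ) :
    {P | P ∈ starSplits 0 k N ∧ P.1 = []}.ncard = (firstDownAt k N).ncard := by
  have himage : (([], ·) : _ → List (Option Bool) × List (Option Bool)) '' firstDownAt k N =
      {P | P ∈ starSplits 0 k N ∧ P.1 = []} := by
    refine Set.Subset.antisymm ?_ ?_
    · rintro _ ⟨U, ⟨hlen, hU, hidx⟩, rfl⟩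
      exact ⟨⟨by simpa using hlen, hU, rfl, by simpa [afterNth] using hidx⟩, rfl⟩
    · rintro ⟨_, U⟩ ⟨⟨hlen, hU, -, hidx⟩, rfl⟩
      exact ⟨U, ⟨by simpa using hlen, hU, by simpa [afterNth] using hidx⟩, rfl⟩
  rw [← himage, Set.ncard_image_of_injective _ (Prod.mk_right_injective [])]

theorem ncard_starSplits (k N : ℕ) : (starSplits 0 k N).ncard = motzkinBallot N (k + 1) +
    ∑ i ∈ Finset.range (N - 1 - k), (i + 1) * motzkin i * motzkinBallot (N - 2 - i) (k + 1) := by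
  have hfin : (starSplits 0 k N).Finite :=
    (finite_length_add_length_eq _ N).subset fun _ hP => hP.1
  rw [← ncard_firstDownAt, ← ncard_starSplits_nil, ← ncard_markedPairs, ← ncard_starSplits_ne_nil,
    ← Set.ncard_inter_add_ncard_sdiff_eq_ncard (starSplits 0 k N) {P | P.1 = []} hfin]
  rfl

end Counting

section IntegerIndices

theorem motzkinZ_natCast (i : ℕ) : motzkinZ i = motzkin i := by
  simp [motzkinZ]

theorem motzkinBallotZ_natCast (n k : ℕ) : motzkinBallotZ n k = motzkinBallot n k := by
  simp [motzkinBallotZ]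

theorem sum_Icc_zero_intCast {M : Type*} [AddCommMonoid M] (f : ℤ → M) (b : ℤ) :
    ∑ i ∈ Finset.Icc 0 b, f i = ∑ i ∈ Finset.range (b + 1).toNat, f i := by
  symm
  refine Finset.sum_nbij' (fun i : ℕ => (i : ℤ)) Int.toNat ?_ ?_ ?_ ?_ fun _ _ => rfl <;>
    · intro i hi
      simp only [Finset.mem_range, Finset.mem_Icc] at hi ⊢
      omega

end IntegerIndices

/-- **Theorem (L = p, p an odd prime).** For a prime `p ≥ 3` and `n ≥ p`,
`|𝒟ₙᵖ| = 2·(T_{n-2,p-1} + Σ_{i=0}^{n-2-p} (i+1)·Mᵢ·T_{n-4-i,p-1})`. -/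
theorem dyck_L_eq_prime_count (p : ℕ) (hp : p.Prime) (hp3 : 3 ≤ p) (n : ℕ) (hn : p ≤ n) :
    ((dyckL n p).ncard : ℤ) =
      2 * (motzkinBallotZ ((n : ℤ) - 2) (p - 1) +
        ∑ i ∈ Finset.Icc (0 : ℤ) ((n : ℤ) - 2 - p),
          (i + 1) * motzkinZ i * motzkinBallotZ ((n : ℤ) - 4 - i) (p - 1)) := by
  obtain ⟨k, rfl⟩ := Nat.exists_eq_add_of_le' hp.two_le
  obtain ⟨N, rfl⟩ := Nat.exists_eq_add_of_le' (hp.two_le.trans hn)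
  have hsucc : k + 2 - 1 = k + 1 := rfl
  have hN : ((N + 2 : ℕ) : ℤ) - 2 = N := by omega
  have hb : ((N : ℤ) - (k + 2 : ℕ) + 1).toNat = N - 1 - k := by omega
  rw [ncard_dyckL hp hp3, hsucc, ncard_dyckRS N 0 k, ncard_starSplits, hN,
    sum_Icc_zero_intCast, hb, motzkinBallotZ_natCast]
  push_cast
  congr 2
  refine Finset.sum_congr rfl fun i hi => ?_
  have hi : (N : ℤ) + 2 - 4 - i = (N - 2 - i : ℕ) := by
    rw [Finset.mem_range] at hi
    omega
  rw [hi, motzkinZ_natCast, motzkinBallotZ_natCast]
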